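/- Peirce's law ((p → q) → p) → p, for distinct atoms p and q, is not N-valid. -/

import Mathlib

/-! ## Dialogical logic: formulas, statements, moves -/

/-- Propositional formulas, built from atoms (indexed by `ℕ`) and `¬`, `∧`, `∨`, `→`. -/
inductive Formula : Type
  | atom : ℕ → Formula
  | neg : Formula → Formula
  | conj : Formula → Formula → Formula
  | disj : Formula → Formula → Formula
  | impl : Formula → Formula → Formula
  deriving DecidableEq, Inhabited

/-- Statements: formulas together with the three symbolic attacks `∧_L`, `∧_R` and `?`. -/
inductive Statement : Type
  | form : Formula → Statement
  | conjL : Statement  -- the symbolic attack ∧_L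
  | conjR : Statement  -- the symbolic attack ∧_R
  | question : Statement   -- the symbolic attack ?
  deriving DecidableEq, Inhabited

/-- A formula is atomic iff it is an atom. -/
def Formula.isAtomic : Formula → Prop
  | .atom _ => True
  | _ => False

/-- A move of a dialogue: a statement together with a reference.  The reference is
`none` for the initial move, `some (m, true)` for an attack on the assertion made at
move `m`, and `some (m, false)` for a defense against the attack made at move `m`. -/
structure Move : Type where
  stmt : Statement
  ref : Option (ℕ × Bool)
  deriving DecidableEq, Inhabited

/-! ## Particle rules -/

/-- Particle rules, attacks: `Attacks a φ` holds when the statement `a` is an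
admissible attack against the assertion `φ`. -/
inductive Attacks : Statement → Formula → Prop
  | conjL (φ ψ : Formula) : Attacks .conjL (.conj φ ψ)
  | conjR (φ ψ : Formula) : Attacks .conjR (.conj φ ψ)
  | disj (φ ψ : Formula) : Attacks .question (.disj φ ψ)
  | impl (φ ψ : Formula) : Attacks (.form φ) (.impl φ ψ)
  | neg (φ : Formula) : Attacks (.form φ) (.neg φ)

/-- Particle rules, defenses: `Defends s a φ` holds when the statement `s` is an
admissible defense of the assertion `φ` against the attack `a`.  (A negation admits
no defense.) -/
inductive Defends : Statement → Statement → Formula → Prop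
  | conjL (φ ψ : Formula) : Defends (.form φ) .conjL (.conj φ ψ)
  | conjR (φ ψ : Formula) : Defends (.form ψ) .conjR (.conj φ ψ)
  | disjL (φ ψ : Formula) : Defends (.form φ) .question (.disj φ ψ)
  | disjR (φ ψ : Formula) : Defends (.form ψ) .question (.disj φ ψ)
  | impl (φ ψ : Formula) : Defends (.form ψ) (.form φ) (.impl φ ψ)

/-! ## Dialogues

A (finite stage of a) dialogue is modelled as a list of moves; the move at index `i`
is the `i`-th move, made by Proponent P if `i` is even and by Opponent O if `i` is odd. -/

/-- The skeletal dialogue conditions: move 0 is an assertion of a formula with no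
reference, and every later move is an attack on, or a defense against, a specified
earlier move of the other player, in accordance with the particle rules; only
non-atomic assertions may be attacked. -/
def IsDialogue (d : List Move) : Prop :=
  (∀ _ : 0 < d.length, d[0]!.ref = none ∧ ∃ φ : Formula, d[0]!.stmt = .form φ) ∧
  (∀ i : ℕ, 0 < i → i < d.length →
    ∃ (m : ℕ) (z : Bool), d[i]!.ref = some (m, z) ∧ m < i ∧ m % 2 ≠ i % 2 ∧
      (z = true →
        ∃ φ : Formula, d[m]!.stmt = .form φ ∧ ¬ φ.isAtomic ∧ Attacks d[i]!.stmt φ) ∧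
      (z = false →
        ∃ (k : ℕ) (φ : Formula), d[m]!.ref = some (k, true) ∧ k < m ∧
          d[k]!.stmt = .form φ ∧ Defends d[i]!.stmt d[m]!.stmt φ))

/-- Rule D10: P may assert an atomic formula only if O has asserted it earlier. -/
def RuleD10 (d : List Move) : Prop :=
  ∀ i < d.length, i % 2 = 0 → ∀ a : ℕ, d[i]!.stmt = .form (.atom a) →
    ∃ j < i, j % 2 = 1 ∧ d[j]!.stmt = .form (.atom a)

/-- Rule D13: each P-assertion may be attacked at most once. -/
def RuleD13 (d : List Move) : Prop :=
  ∀ m : ℕ, m % 2 = 0 → ∀ i < d.length, ∀ j < d.length,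
    d[i]!.ref = some (m, true) → d[j]!.ref = some (m, true) → i = j

/-- Rule E: O may only react (attack or defend) against the immediately preceding
P-move. -/
def RuleE (d : List Move) : Prop :=
  ∀ i < d.length, i % 2 = 1 → ∃ z : Bool, d[i]!.ref = some (i - 1, z)

/-- The rule set N = {D10, D13}. -/
def NRules (d : List Move) : Prop := RuleD10 d ∧ RuleD13 d

/-- The rule set CL = {D10, D13, E}. -/
def CLRules (d : List Move) : Prop := RuleD10 d ∧ RuleD13 d ∧ RuleE d

/-- A dialogue commences with `φ` when its initial move is P's assertion of `φ`. -/
def CommencesWith (φ : Formula) (d : List Move) : Prop :=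
  0 < d.length ∧ d[0]!.stmt = .form φ

/-- An `S`-dialogue for `φ` (for a rule set `S`): a dialogue commencing with `φ`
that obeys the structural rules `S`.  These are exactly the branches (identified
with their underlying move sequences) of the `S`-dialogue tree for `φ`. -/
def SDialogueFor (S : List Move → Prop) (φ : Formula) (d : List Move) : Prop :=
  IsDialogue d ∧ S d ∧ CommencesWith φ d

/-- P wins a finite `S`-dialogue for `φ`: it ends with a P-move (the last index,
`d.length - 1`, is even, i.e. `d.length` is odd) and it cannot be extended by any
legal further (O-)move. -/
def WinsFor (S : List Move → Prop) (φ : Formula) (d : List Move) : Prop :=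
  SDialogueFor S φ d ∧ d.length % 2 = 1 ∧ ∀ m : Move, ¬ SDialogueFor S φ (d ++ [m])

/-- An `S`-winning strategy for P for `φ`, modelled as a set `T` of `S`-dialogues for
`φ`: the nodes of a rooted subtree of the `S`-dialogue tree for `φ`, each node being
identified with the dialogue leading from the root to it.  The conditions state that
`T` is a nonempty, prefix-closed set of `S`-dialogues for `φ` (hence a rooted subtree
of the `S`-dialogue tree with the same root), that every branch of `T` is a finite
`S`-dialogue won by P (leaves are wins for P, and there is no infinite branch), that
every node at odd depth (an O-move) has exactly one child, and that every node at
even depth (a P-move) has the same children in `T` as in the full dialogue tree. -/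
structure IsWinningStrategy (S : List Move → Prop) (φ : Formula) (T : Set (List Move)) : Prop where
  nonempty : T.Nonempty
  dialogues : ∀ d ∈ T, SDialogueFor S φ d
  prefix_closed : ∀ d ∈ T, ∀ e : List Move, e <+: d → 0 < e.length → e ∈ T
  leaf_wins : ∀ d ∈ T, (∀ m : Move, d ++ [m] ∉ T) → WinsFor S φ d
  no_infinite_branch : ∀ f : ℕ → Move, ∃ n : ℕ, 0 < n ∧ (List.ofFn fun i : Fin n => f i) ∉ T
  odd_unique_child : ∀ d ∈ T, 0 < d.length → d.length % 2 = 0 → ∃! m : Move, d ++ [m] ∈ T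
  even_all_children : ∀ d ∈ T, d.length % 2 = 1 →
    ∀ m : Move, SDialogueFor S φ (d ++ [m]) → d ++ [m] ∈ T

/-- `φ` is `S`-valid iff P has an `S`-winning strategy for `φ`. -/
def SValid (S : List Move → Prop) (φ : Formula) : Prop :=
  ∃ T : Set (List Move), IsWinningStrategy S φ T

/-- `φ` is N-valid (`⊨_N φ`) iff P has an N-winning strategy for `φ`. -/
def NValid (φ : Formula) : Prop := SValid NRules φ

/-!
Nothing in the rules N stops O from defending repeatedly against one and the same attack.  In a
dialogue for `(χ → ψ) → a` with `a` an atom, O attacks by asserting `χ → ψ`.  By D10, P cannot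
answer with `a`, so P must attack `χ → ψ` by asserting `χ`; from then on O can always assert `ψ`
again, so P never wins.  A winning strategy, having no infinite branch, would contain a win for P
beyond this position.
-/

section Lists

variable {α : Type*}

theorem exists_ofFn_prefix {l : ℕ → List α} (hprefix : ∀ n, l n <+: l (n + 1))
    (hlength : ∀ n, n ≤ (l n).length) :
    ∃ f : ℕ → α, ∀ n, (List.ofFn fun i : Fin n => f i) <+: l n := by
  have hmono : ∀ {m n}, m ≤ n → l m <+: l n := fun {m n} hmn =>
    Nat.le_induction List.prefix_rfl (fun k _ ih => ih.trans (hprefix k)) n hmn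
  refine ⟨fun n => (l (n + 1))[n]'(hlength (n + 1)), fun n => ?_⟩
  refine List.prefix_iff_getElem.mpr ⟨by simpa using hlength n, fun i hi => ?_⟩
  rw [List.getElem_ofFn]
  exact (hmono (by simpa using hi)).getElem _

theorem lt_length_append_singleton_iff {d : List α} {x : α} {i : ℕ} :
    i < (d ++ [x]).length ↔ i < d.length ∨ i = d.length := by
  rw [List.length_append, List.length_singleton, Nat.lt_succ_iff_lt_or_eq]

variable [Inhabited α]

theorem getElem!_append_singleton_of_lt {d : List α} (x : α) {i : ℕ} (hi : i < d.length) :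
    (d ++ [x])[i]! = d[i]! := by
  grind

theorem getElem!_append_singleton_length (d : List α) (x : α) : (d ++ [x])[d.length]! = x := by
  simp

end Lists

theorem Attacks.not_isAtomic {s : Statement} {θ : Formula} (h : Attacks s θ) :
    ¬ θ.isAtomic := by
  cases h <;> exact id

section Extensions

variable {d : List Move} {x : Move} {s : Statement} {φ θ : Formula} {m k : ℕ}

/-- The skeletal condition on a move `x` made as move number `i`, the earlier moves being the first
`i` entries of `d`: the clause of `IsDialogue` for one non-initial move. -/
def IsReply (d : List Move) (i : ℕ) (x : Move) : Prop :=
  ∃ (m : ℕ) (z : Bool), x.ref = some (m, z) ∧ m < i ∧ m % 2 ≠ i % 2 ∧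
    (z = true → ∃ θ : Formula, d[m]!.stmt = .form θ ∧ ¬ θ.isAtomic ∧ Attacks x.stmt θ) ∧
    (z = false → ∃ (k : ℕ) (θ : Formula), d[m]!.ref = some (k, true) ∧ k < m ∧
      d[k]!.stmt = .form θ ∧ Defends x.stmt d[m]!.stmt θ)

theorem IsReply.congr {d e : List Move} {i : ℕ} (h : ∀ j < i, d[j]! = e[j]!)
    (hd : IsReply d i x) : IsReply e i x := by
  obtain ⟨m, z, href, hm, hparity, hattack, hdefense⟩ := hd
  rw [h m hm] at hattack hdefense
  refine ⟨m, z, href, hm, hparity, hattack, fun hz => ?_⟩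
  obtain ⟨k, θ, hmref, hk, hθ, hdef⟩ := hdefense hz
  exact ⟨k, θ, hmref, hk, h k (hk.trans hm) ▸ hθ, hdef⟩

theorem IsDialogue.append_singleton (hd : IsDialogue d) (hpos : 0 < d.length)
    (hx : IsReply d d.length x) : IsDialogue (d ++ [x]) := by
  have hagree : ∀ j < d.length, d[j]! = (d ++ [x])[j]! := fun j hj =>
    (getElem!_append_singleton_of_lt x hj).symm
  refine ⟨fun _ => hagree 0 hpos ▸ hd.1 hpos, fun i hi hlt => ?_⟩
  change IsReply (d ++ [x]) i (d ++ [x])[i]!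
  obtain hlt | rfl := lt_length_append_singleton_iff.mp hlt
  · rw [← hagree i hlt]
    exact IsReply.congr (fun j hj => hagree j (hj.trans hlt)) (hd.2 i hi hlt)
  · rw [getElem!_append_singleton_length]
    exact hx.congr hagree

theorem RuleD10.append_singleton_of_odd (hd : RuleD10 d) (hodd : d.length % 2 = 1) :
    RuleD10 (d ++ [x]) := by
  intro i hi heven a ha
  have hlt : i < d.length := (lt_length_append_singleton_iff.mp hi).resolve_right (by omega)
  rw [getElem!_append_singleton_of_lt x hlt] at ha
  obtain ⟨j, hj, hjodd, hja⟩ := hd i hlt heven a ha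
  exact ⟨j, hj, hjodd, by rwa [getElem!_append_singleton_of_lt x (hj.trans hlt)]⟩

theorem RuleD13.append_singleton (hd : RuleD13 d)
    (hx : ∀ m, x.ref = some (m, true) → ∀ i < d.length, d[i]!.ref ≠ some (m, true)) :
    RuleD13 (d ++ [x]) := by
  intro m heven i hi j hj hri hrj
  rcases lt_length_append_singleton_iff.mp hi with hi | rfl <;>
    rcases lt_length_append_singleton_iff.mp hj with hj | rfl <;>
    simp only [getElem!_append_singleton_of_lt, getElem!_append_singleton_length, hi, hj]
      at hri hrj
  · exact hd m heven i hi j hj hri hrj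
  · exact absurd hri (hx m hrj i hi)
  · exact absurd hrj (hx m hri j hj)
  · rfl

theorem SDialogueFor.append_singleton_of_odd (hd : SDialogueFor NRules φ d)
    (hodd : d.length % 2 = 1) (hreply : IsReply d d.length x)
    (hfresh : ∀ m, x.ref = some (m, true) → ∀ i < d.length, d[i]!.ref ≠ some (m, true)) :
    SDialogueFor NRules φ (d ++ [x]) := by
  obtain ⟨hdialogue, ⟨hD10, hD13⟩, hpos, hφ⟩ := hd
  refine ⟨hdialogue.append_singleton hpos hreply,
    ⟨hD10.append_singleton_of_odd hodd, hD13.append_singleton hfresh⟩, by simp, ?_⟩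
  rwa [getElem!_append_singleton_of_lt x hpos]

theorem SDialogueFor.append_attack (hd : SDialogueFor NRules φ d) (hodd : d.length % 2 = 1)
    (hm : m < d.length) (heven : m % 2 = 0) (hθ : d[m]!.stmt = .form θ) (hs : Attacks s θ)
    (hfresh : ∀ i < d.length, d[i]!.ref ≠ some (m, true)) :
    SDialogueFor NRules φ (d ++ [⟨s, some (m, true)⟩]) := by
  refine hd.append_singleton_of_odd hodd
    ⟨m, true, rfl, hm, by omega, fun _ => ⟨θ, hθ, hs.not_isAtomic, hs⟩, nofun⟩ fun n hn => ?_
  cases hn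
  exact hfresh

theorem SDialogueFor.append_defense (hd : SDialogueFor NRules φ d) (hodd : d.length % 2 = 1)
    (hm : m < d.length) (heven : m % 2 = 0) (href : d[m]!.ref = some (k, true)) (hk : k < m)
    (hθ : d[k]!.stmt = .form θ) (hs : Defends s d[m]!.stmt θ) :
    SDialogueFor NRules φ (d ++ [⟨s, some (m, false)⟩]) :=
  hd.append_singleton_of_odd hodd
    ⟨m, false, rfl, hm, by omega, nofun, fun _ => ⟨k, θ, href, hk, hθ, hs⟩⟩ nofun

end Extensions

section Openings

variable {S : List Move → Prop} {φ χ ψ : Formula} {a : ℕ}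

theorem SDialogueFor.singleton_prefix {d : List Move} (hd : SDialogueFor S φ d) :
    [⟨.form φ, none⟩] <+: d := by
  obtain ⟨⟨hinit, -⟩, -, hpos, hφ⟩ := hd
  match d, hpos with
  | ⟨s, r⟩ :: t, hpos =>
    obtain rfl : r = none := (hinit hpos).1
    obtain rfl : s = .form φ := hφ
    exact List.prefix_append _ t

theorem SDialogueFor.reply_eq_attack {x : Move}
    (hd : SDialogueFor NRules (.impl (.impl χ ψ) (.atom a))
      [⟨.form (.impl (.impl χ ψ) (.atom a)), none⟩, ⟨.form (.impl χ ψ), some (0, true)⟩, x]) :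
    x = ⟨.form χ, some (1, true)⟩ := by
  obtain ⟨⟨-, hreply⟩, ⟨hD10, -⟩, -⟩ := hd
  have hno_atom : x.stmt ≠ .form (.atom a) := by
    intro hx
    obtain ⟨j, hj, hjodd, hja⟩ := hD10 2 (by simp) rfl a hx
    obtain rfl : j = 1 := by omega
    cases hja
  obtain ⟨m, z, href, hm, hparity, hattack, hdefense⟩ := hreply 2 (by simp) (by simp)
  obtain rfl : m = 1 := by omega
  obtain ⟨s, r⟩ := x
  obtain rfl : r = some (1, z) := href
  cases z with
  | true =>
    obtain ⟨θ, hθ, -, hs⟩ := hattack rfl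
    cases hθ
    cases hs
    rfl
  | false =>
    obtain ⟨k, θ, hk, -, hθ, hs⟩ := hdefense rfl
    cases hk
    cases hθ
    cases hs
    exact absurd rfl hno_atom

end Openings

namespace IsWinningStrategy

variable {S : List Move → Prop} {φ : Formula} {T : Set (List Move)}

theorem singleton_mem (hT : IsWinningStrategy S φ T) : [⟨.form φ, none⟩] ∈ T := by
  obtain ⟨d, hd⟩ := hT.nonempty
  exact hT.prefix_closed d hd _ (hT.dialogues d hd).singleton_prefix (by simp)

theorem wellFounded_extension (hT : IsWinningStrategy S φ T) :
    WellFounded fun e d : List Move => e ∈ T ∧ ∃ m, e = d ++ [m] := by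
  rw [wellFounded_iff_isEmpty_descending_chain]
  refine ⟨fun ⟨l, hl⟩ => ?_⟩
  have hprefix (n : ℕ) : l n <+: l (n + 1) := by
    obtain ⟨-, m, hm⟩ := hl n
    exact ⟨[m], hm.symm⟩
  have hlength (n : ℕ) : n ≤ (l n).length := by
    induction n with
    | zero => exact Nat.zero_le _
    | succ n ih =>
      obtain ⟨-, m, hm⟩ := hl n
      rw [hm, List.length_append]
      exact Nat.succ_le_succ ih
  obtain ⟨f, hf⟩ := exists_ofFn_prefix hprefix hlength
  obtain ⟨n, hn, hnT⟩ := hT.no_infinite_branch f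
  obtain ⟨n, rfl⟩ := Nat.exists_eq_succ_of_ne_zero hn.ne'
  exact hnT (hT.prefix_closed _ (hl n).1 _ (hf _) (by simp))

theorem exists_winsFor_of_mem (hT : IsWinningStrategy S φ T) {d : List Move} (hd : d ∈ T) :
    ∃ e, d <+: e ∧ WinsFor S φ e := by
  obtain ⟨e, ⟨he, hde⟩, hmin⟩ :=
    hT.wellFounded_extension.has_min {e | e ∈ T ∧ d <+: e} ⟨d, hd, List.prefix_rfl⟩
  refine ⟨e, hde, hT.leaf_wins e he fun m hm => ?_⟩
  exact hmin (e ++ [m]) ⟨hm, hde.trans (List.prefix_append e [m])⟩ ⟨hm, m, rfl⟩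

end IsWinningStrategy

theorem peirce_not_N_valid_general (χ ψ : Formula) (a : ℕ) :
    ¬ NValid (.impl (.impl χ ψ) (.atom a)) := by
  rintro ⟨T, hT⟩
  have hroot := hT.singleton_mem
  have hattack : [⟨.form (.impl (.impl χ ψ) (.atom a)), none⟩,
      ⟨.form (.impl χ ψ), some (0, true)⟩] ∈ T :=
    hT.even_all_children _ hroot rfl _ <|
      (hT.dialogues _ hroot).append_attack rfl Nat.one_pos rfl rfl (.impl _ _) (by simp)
  obtain ⟨x, hx, -⟩ := hT.odd_unique_child _ hattack Nat.two_pos (Nat.mod_self 2)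
  obtain rfl : x = ⟨.form χ, some (1, true)⟩ := (hT.dialogues _ hx).reply_eq_attack
  obtain ⟨_, ⟨t, rfl⟩, hdialogue, hodd, hstuck⟩ := hT.exists_winsFor_of_mem hx
  exact hstuck ⟨.form ψ, some (2, false)⟩ <|
    hdialogue.append_defense hodd (by simp) rfl rfl Nat.one_lt_two rfl (.impl χ ψ)

/-- Peirce's law `((p → q) → p) → p`, for distinct atoms `p` and
`q`, is not N-valid. -/
theorem peirce_not_N_valid (p q : ℕ) (hpq : p ≠ q) :
    ¬ NValid (Formula.impl
        (Formula.impl (Formula.impl (Formula.atom p) (Formula.atom q)) (Formula.atom p))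
        (Formula.atom p)) := by
  exact peirce_not_N_valid_general _ _ p
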